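/- Identify ℝ^m with ℝ^{m−n} × ℝ^n with coordinates (q, y), and write ∂/∂y^l for the partial derivative in the l-th direction of the second factor. Let U ⊆ ℝ^m be open, let β^k_{lm} : U → ℝ (1 ≤ k, l, m ≤ n) be smooth functions satisfying the zero-curvature identity ∂β^l_{jk}/∂y^i − ∂β^l_{ik}/∂y^j + β^l_{im} β^m_{jk} − β^l_{jm} β^m_{ik} = 0 on U for all i, j, k, l, and let z₀ ∈ U. Then there exist an open neighbourhood U' ⊆ U of z₀ and a smooth map A : U' → (n×n real matrices) such that A(z₀) is the identity matrix and ∂A_j^k/∂y^l + A_j^m β^k_{lm} = 0 on U' for all j, k, l. -/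

import Mathlib

/-- The constant vector field `∂/∂y^l` on `ℝ^{m−n} × ℝ^n` (here `p = m − n`). -/
def eVec (p n : ℕ) (l : Fin n) : (Fin p → ℝ) × (Fin n → ℝ) := (0, Pi.single l 1)

open Set Filter Topology

universe u

/-- Pointwise evaluation of a continuous family of operators, as a continuous linear map. -/
noncomputable def ContinuousMap.toCLMFamily (K E F : Type*) [TopologicalSpace K] [CompactSpace K]
    [NormedAddCommGroup E] [NormedSpace ℝ E] [NormedAddCommGroup F] [NormedSpace ℝ F] :
    C(K, E →L[ℝ] F) →L[ℝ] E →L[ℝ] C(K, F) :=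
  LinearMap.mkContinuous₂
    (LinearMap.mk₂ ℝ (fun (g : C(K, E →L[ℝ] F)) (e : E) => (⟨fun t => g t e, by fun_prop⟩ : C(K, F)))
      (fun _ _ _ => by ext; simp) (fun _ _ _ => by ext; simp) (fun _ _ _ => by ext; simp)
      (fun _ _ _ => by ext; simp))
    1 (fun g e => by
      rw [ContinuousMap.norm_le _ (by positivity)]
      intro t
      simpa using (g t).le_of_opNorm_le (g.norm_coe_le_norm t) e)

@[simp] theorem ContinuousMap.toCLMFamily_apply {K E F : Type*} [TopologicalSpace K]
    [CompactSpace K] [NormedAddCommGroup E] [NormedSpace ℝ E] [NormedAddCommGroup F]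
    [NormedSpace ℝ F] (g : C(K, E →L[ℝ] F)) (e : E) (t : K) :
    ContinuousMap.toCLMFamily K E F g e t = g t e := rfl

section curry
variable {K E F : Type*} [TopologicalSpace K] [CompactSpace K]
    [NormedAddCommGroup E] [NormedSpace ℝ E] [NormedAddCommGroup F] [NormedSpace ℝ F]

/-- A family of functions with jointly continuous derivative in the parameter is differentiable as
a map into the space of continuous functions. -/
theorem ContinuousMap.hasFDerivAt_of_forall_apply {g : E → C(K, F)} {g' : E → C(K, E →L[ℝ] F)}
    (hg' : Continuous g') (h : ∀ z t, HasFDerivAt (fun w => g w t) (g' z t) z) (z : E) :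
    HasFDerivAt g (ContinuousMap.toCLMFamily K E F (g' z)) z := by
  rw [hasFDerivAt_iff_isLittleO, Asymptotics.isLittleO_iff]
  intro c hc
  obtain ⟨δ, hδ, hball⟩ := (Metric.continuousAt_iff (f := g') (a := z)).1 hg'.continuousAt c hc
  filter_upwards [Metric.ball_mem_nhds z hδ] with w hw
  rw [ContinuousMap.norm_le _ (by positivity)]
  intro t
  refine (convex_ball z δ).norm_image_sub_le_of_norm_hasFDerivWithin_le' (f := fun w => g w t)
    (f' := fun w => g' w t) (φ := g' z t) (fun x _ => (h x t).hasFDerivWithinAt) (fun x hx => ?_)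
    (Metric.mem_ball_self hδ) hw
  rw [← dist_eq_norm]
  exact (ContinuousMap.dist_apply_le_dist t).trans (hball hx).le

end curry

theorem ContinuousMap.contDiff_nat_of_uncurry {K : Set ℝ} [CompactSpace K] {E : Type u}
    [NormedAddCommGroup E] [NormedSpace ℝ E] (n : ℕ) :
    ∀ {F : Type u} [NormedAddCommGroup F] [NormedSpace ℝ F] {f : E × ℝ → F} {g : E → C(K, F)}
      (_ : ContDiff ℝ n f) (_ : ∀ z t, g z t = f (z, t)), ContDiff ℝ n g := by
  induction n with
  | zero =>
    intro F _ _ f g hf hg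
    rw [Nat.cast_zero, contDiff_zero] at hf ⊢
    exact ContinuousMap.continuous_of_continuous_uncurry _ (by
      simp only [Function.uncurry_def, hg]; fun_prop)
  | succ n ih =>
    intro F _ _ f g hf hg
    rw [Nat.cast_succ] at hf ⊢
    have hf' : ContDiff ℝ n (fun p => (fderiv ℝ f p).comp (ContinuousLinearMap.inl ℝ E ℝ)) :=
      (hf.fderiv_right le_rfl).clm_comp contDiff_const
    let g' : E → C(K, E →L[ℝ] F) := fun z =>
      ⟨fun t => (fderiv ℝ f (z, t)).comp (ContinuousLinearMap.inl ℝ E ℝ), by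
        exact hf'.continuous.comp (by fun_prop : Continuous fun t : K => (z, (t : ℝ)))⟩
    have hg' : ContDiff ℝ n g' := ih hf' fun _ _ => rfl
    refine contDiff_succ_iff_hasFDerivAt.2
      ⟨_, (ContinuousMap.toCLMFamily K E F).contDiff.comp hg',
        ContinuousMap.hasFDerivAt_of_forall_apply hg'.continuous fun z t => ?_⟩
    simp only [hg]
    have h1 := (hf.differentiable (by simp) (z, (t : ℝ))).hasFDerivAt
    exact h1.comp z (hasFDerivAt_prodMk_left z (t : ℝ))

/-- A jointly smooth function, regarded as a family of continuous functions on a compact set of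
times, depends smoothly on the parameter. -/
theorem ContinuousMap.contDiff_of_uncurry {K : Set ℝ} [CompactSpace K] {E F : Type u}
    [NormedAddCommGroup E] [NormedSpace ℝ E] [NormedAddCommGroup F] [NormedSpace ℝ F]
    {f : E × ℝ → F} {g : E → C(K, F)}
    (hf : ContDiff ℝ (⊤ : ℕ∞) f) (hg : ∀ z t, g z t = f (z, t)) : ContDiff ℝ (⊤ : ℕ∞) g := by
  rw [contDiff_infty] at hf ⊢
  exact fun n => ContinuousMap.contDiff_nat_of_uncurry n (hf n) hg

section Volterra
variable {M : Type*} [NormedRing M] [NormedAlgebra ℝ M]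

/-- Integration from `0`, as an operator on continuous functions on the unit interval. -/
noncomputable def volterra (M : Type*) [NormedAddCommGroup M] [NormedSpace ℝ M] :
    C(Icc (0 : ℝ) 1, M) →L[ℝ] C(Icc (0 : ℝ) 1, M) :=
  LinearMap.mkContinuous
    { toFun := fun h => ⟨fun t => ∫ s in (0 : ℝ)..t, h.IccExtend zero_le_one s,
        (intervalIntegral.continuous_primitive
          (fun _ _ => (ContinuousMap.continuous _).intervalIntegrable _ _) 0).comp
          continuous_subtype_val⟩
      map_add' := fun g h => by
        ext t
        exact intervalIntegral.integral_add
          ((g.IccExtend zero_le_one).continuous.intervalIntegrable _ _)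
          ((h.IccExtend zero_le_one).continuous.intervalIntegrable _ _)
      map_smul' := fun c h => by
        ext t
        exact intervalIntegral.integral_smul c _ }
    1 (fun h => by
      rw [ContinuousMap.norm_le _ (by positivity), one_mul]
      intro t
      refine (intervalIntegral.norm_integral_le_of_norm_le_const (C := ‖h‖) fun s _ =>
        h.norm_coe_le_norm _).trans ?_
      have h1 : |(t : ℝ) - 0| ≤ 1 := by rw [sub_zero, abs_of_nonneg t.2.1]; exact t.2.2
      nlinarith [norm_nonneg h])

theorem volterra_apply {M : Type*} [NormedAddCommGroup M] [NormedSpace ℝ M]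
    (h : C(Icc (0 : ℝ) 1, M)) (t : Icc (0 : ℝ) 1) :
    volterra M h t = ∫ s in (0 : ℝ)..t, h.IccExtend zero_le_one s := rfl

/-- The operator `X ↦ X + ∫₀ X b`. -/
noncomputable def volterraOp (b : C(Icc (0 : ℝ) 1, M)) :
    C(Icc (0 : ℝ) 1, M) →L[ℝ] C(Icc (0 : ℝ) 1, M) :=
  1 + (volterra M).comp ((ContinuousLinearMap.mul ℝ C(Icc (0 : ℝ) 1, M)).flip b)

theorem volterraOp_apply (b X : C(Icc (0 : ℝ) 1, M)) :
    volterraOp b X = X + volterra M (X * b) := rfl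

theorem contDiff_volterraOp {n : WithTop ℕ∞} : ContDiff ℝ n (volterraOp (M := M)) := by
  unfold volterraOp
  exact contDiff_const.add (contDiff_const.clm_comp (ContinuousLinearMap.contDiff _))

end Volterra

/-- The point at time `t` of the ray through `z` inside the slice `{z.1} × Y`, starting at `y₀`. -/
def fiberRay {Q Y : Type*} [AddCommGroup Y] [Module ℝ Y] (y₀ : Y)
    (z : Q × Y) (t : ℝ) : Q × Y :=
  (z.1, y₀ + t • (z.2 - y₀))

theorem fiberRay_one {Q Y : Type*} [AddCommGroup Y] [Module ℝ Y] (y₀ : Y) (z : Q × Y) :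
    fiberRay y₀ z 1 = z := by
  simp [fiberRay]

theorem fiberRay_snd_sub {Q Y : Type*} [AddCommGroup Y] [Module ℝ Y] (y₀ : Y)
    (z : Q × Y) (t : ℝ) :
    (fiberRay y₀ z t).2 - y₀ = t • (z.2 - y₀) := by
  simp [fiberRay]

theorem fiberRay_fiberRay {Q Y : Type*} [AddCommGroup Y] [Module ℝ Y] (y₀ : Y)
    (z : Q × Y) (s t : ℝ) :
    fiberRay y₀ (fiberRay y₀ z s) t = fiberRay y₀ z (s * t) := by
  simp [fiberRay, smul_smul, mul_comm]

theorem fiberRay_mem_ball {Q Y : Type*} [PseudoMetricSpace Q] [NormedAddCommGroup Y]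
    [NormedSpace ℝ Y] {z₀ z : Q × Y} {r : ℝ} (hz : z ∈ Metric.ball z₀ r)
    {t : ℝ} (ht : t ∈ Icc (0 : ℝ) 1) : fiberRay z₀.2 z t ∈ Metric.ball z₀ r := by
  rw [Metric.mem_ball, Prod.dist_eq, max_lt_iff] at hz ⊢
  refine ⟨hz.1, lt_of_le_of_lt ?_ hz.2⟩
  rw [dist_eq_norm, fiberRay_snd_sub, norm_smul, Real.norm_of_nonneg ht.1, dist_eq_norm]
  exact mul_le_of_le_one_left (norm_nonneg _) ht.2

section radial
variable {Q Y M : Type u} [NormedAddCommGroup Q] [NormedSpace ℝ Q]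
  [NormedAddCommGroup Y] [NormedSpace ℝ Y] [NormedRing M] [NormedAlgebra ℝ M]

theorem hasDerivAt_fiberRay (y₀ : Y) (z : Q × Y) (t : ℝ) :
    HasDerivAt (fiberRay y₀ z) ((0, z.2 - y₀) : Q × Y) t := by
  refine (hasDerivAt_const t z.1).prodMk ?_
  simpa using ((hasDerivAt_id t).smul_const (z.2 - y₀)).const_add y₀

theorem volterra_comp_mul {N : Type*} [NormedAddCommGroup N] [NormedSpace ℝ N]
    {h k : C(Icc (0 : ℝ) 1, N)} (τ : Icc (0 : ℝ) 1)
    (hk : ∀ s, k s = (τ : ℝ) • h (τ * s)) (s : Icc (0 : ℝ) 1) :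
    volterra N k s = volterra N h (τ * s) := by
  rw [volterra_apply, volterra_apply]
  have : ∀ σ ∈ uIcc (0 : ℝ) s, k.IccExtend zero_le_one σ
      = (τ : ℝ) • h.IccExtend zero_le_one ((τ : ℝ) * σ) := by
    intro σ hσ
    rw [uIcc_of_le s.2.1] at hσ
    have hσ' : σ ∈ Icc (0 : ℝ) 1 := ⟨hσ.1, hσ.2.trans s.2.2⟩
    have h2 : (τ : ℝ) * σ ∈ Icc (0 : ℝ) 1 := (τ * ⟨σ, hσ'⟩ : Icc (0 : ℝ) 1).2
    rw [ContinuousMap.coe_IccExtend, ContinuousMap.coe_IccExtend, IccExtend_of_mem _ _ hσ',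
      IccExtend_of_mem _ _ h2, hk]
    rfl
  rw [intervalIntegral.integral_congr this, intervalIntegral.integral_smul,
    intervalIntegral.smul_integral_comp_mul_left]
  simp

/-- A smooth operator-valued form admits a smooth solution, near a given point, of its parallel
transport equation along the rays of the fibres `{q} × Y`. -/
theorem exists_radial_solution [CompleteSpace M] {ω : Q × Y → Y →L[ℝ] M}
    (hω : ContDiff ℝ (⊤ : ℕ∞) ω) (z₀ : Q × Y) :
    ∃ r > 0, ∃ A : Q × Y → M, ContDiffOn ℝ (⊤ : ℕ∞) A (Metric.ball z₀ r) ∧ A z₀ = 1 ∧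
      ∀ z ∈ Metric.ball z₀ r,
        fderiv ℝ A z (0, z.2 - z₀.2) + A z * ω z (z.2 - z₀.2) = 0 := by
  let f : (Q × Y) × ℝ → M := fun p => ω (fiberRay z₀.2 p.1 p.2) (p.1.2 - z₀.2)
  have hf : ContDiff ℝ (⊤ : ℕ∞) f := by
    unfold f fiberRay
    exact (hω.comp (by fun_prop)).clm_apply (by fun_prop)
  let b : Q × Y → C(Icc (0 : ℝ) 1, M) := fun z => ⟨fun t => f (z, t), by
    exact hf.continuous.comp (by fun_prop)⟩
  have hb : ContDiff ℝ (⊤ : ℕ∞) b := ContinuousMap.contDiff_of_uncurry hf fun _ _ => rfl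
  have hb₀ : b z₀ = 0 := by
    ext t
    simp [b, f]
  have hL : ContDiff ℝ (⊤ : ℕ∞) fun z => volterraOp (b z) := contDiff_volterraOp.comp hb
  have hL₀ : volterraOp (b z₀) = 1 := by
    ext1 X
    simp [volterraOp_apply, hb₀]
  have hopen : IsOpen {T : C(Icc (0 : ℝ) 1, M) →L[ℝ] C(Icc (0 : ℝ) 1, M) | IsUnit T} :=
    Units.isOpen (R := C(Icc (0 : ℝ) 1, M) →L[ℝ] C(Icc (0 : ℝ) 1, M))
  have hunit : ∀ᶠ z in 𝓝 z₀, IsUnit (volterraOp (b z)) :=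
    (hopen.preimage hL.continuous).mem_nhds
      (by rw [mem_preimage, mem_ofPred_eq, hL₀]; exact isUnit_one)
  obtain ⟨r, hr, hball⟩ := Metric.eventually_nhds_iff_ball.1 hunit
  let X : Q × Y → C(Icc (0 : ℝ) 1, M) := fun z => Ring.inverse (volterraOp (b z)) 1
  have hX : ∀ z ∈ Metric.ball z₀ r, volterraOp (b z) (X z) = 1 := fun z hz => by
    change (volterraOp (b z) * Ring.inverse (volterraOp (b z))) 1 = 1
    rw [Ring.mul_inverse_cancel _ (hball z hz)]
    rfl
  have hXu : ∀ z ∈ Metric.ball z₀ r, ∀ W, volterraOp (b z) W = 1 → W = X z := fun z hz W hW => by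
    change W = Ring.inverse (volterraOp (b z)) 1
    rw [← hW]
    change W = (Ring.inverse (volterraOp (b z)) * volterraOp (b z)) W
    rw [Ring.inverse_mul_cancel _ (hball z hz)]
    rfl
  let one' : Icc (0 : ℝ) 1 := 1
  let A : Q × Y → M := fun z => X z one'
  have hA : ContDiffOn ℝ (⊤ : ℕ∞) A (Metric.ball z₀ r) := by
    intro z hz
    have h1 : ContDiffAt ℝ (⊤ : ℕ∞) (fun z => Ring.inverse (volterraOp (b z))) z := by
      have h2 := contDiffAt_ringInverse ℝ (n := (⊤ : ℕ∞))
        (R := C(Icc (0 : ℝ) 1, M) →L[ℝ] C(Icc (0 : ℝ) 1, M)) (hball z hz).unit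
      exact ContDiffAt.comp z h2 hL.contDiffAt
    have h3 : ContDiffAt ℝ (⊤ : ℕ∞) X z := h1.clm_apply contDiffAt_const
    exact ((ContinuousMap.evalCLM ℝ one').contDiff.contDiffAt.comp z h3).contDiffWithinAt
  have hray : ∀ z ∈ Metric.ball z₀ r, ∀ τ : Icc (0 : ℝ) 1, A (fiberRay z₀.2 z τ) = X z τ := by
    intro z hz τ
    let W : C(Icc (0 : ℝ) 1, M) := ⟨fun s => X z (τ * s), by fun_prop⟩
    have hW : W = X (fiberRay z₀.2 z τ) := by
      refine hXu _ (fiberRay_mem_ball hz τ.2) _ ?_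
      ext s
      have h1 := congrArg (fun c => c (τ * s)) (hX z hz)
      rw [volterraOp_apply] at h1 ⊢
      simp only [ContinuousMap.add_apply, ContinuousMap.one_apply] at h1 ⊢
      rw [volterra_comp_mul (h := X z * b z) τ]
      · exact h1
      · intro s
        simp only [ContinuousMap.mul_apply, W, b, f, ContinuousMap.coe_mk, fiberRay_fiberRay,
          fiberRay_snd_sub, map_smul, mul_smul_comm, Icc.coe_mul]
    change X (fiberRay z₀.2 z τ) one' = X z τ
    rw [← hW]
    exact congrArg (X z) (mul_one τ)
  refine ⟨r, hr, A, hA, ?_, ?_⟩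
  · change Ring.inverse (volterraOp (b z₀)) 1 one' = 1
    rw [hL₀, Ring.inverse_one]
    rfl
  intro z hz
  let F : C(ℝ, M) := (X z * b z).IccExtend zero_le_one
  have hd1 : HasDerivWithinAt (fun t => A (fiberRay z₀.2 z t)) (-F 1) (Icc 0 1) 1 := by
    have h1 : HasDerivAt (fun t : ℝ => 1 - ∫ s in (0 : ℝ)..t, F s) (-F 1) 1 :=
      (intervalIntegral.integral_hasDerivAt_right (F.continuous.intervalIntegrable _ _)
        (F.continuous.stronglyMeasurableAtFilter _ _) F.continuous.continuousAt).const_sub 1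
    refine h1.hasDerivWithinAt.congr_of_mem (fun t ht => ?_) (by simp)
    have h2 := congrArg (fun c => c ⟨t, ht⟩) (hX z hz)
    rw [hray z hz ⟨t, ht⟩, eq_sub_iff_add_eq]
    exact h2
  have hd2 : HasDerivWithinAt (fun t => A (fiberRay z₀.2 z t)) (fderiv ℝ A z (0, z.2 - z₀.2))
      (Icc 0 1) 1 := by
    have h1 : HasFDerivAt A (fderiv ℝ A z) (fiberRay z₀.2 z 1) := by
      rw [fiberRay_one]
      exact ((hA.contDiffAt (Metric.isOpen_ball.mem_nhds hz)).differentiableAt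
        (by simp)).hasFDerivAt
    exact (h1.comp_hasDerivAt 1 (hasDerivAt_fiberRay z₀.2 z 1)).hasDerivWithinAt
  have huniq : UniqueDiffWithinAt ℝ (Icc (0 : ℝ) 1) 1 := uniqueDiffOn_Icc_zero_one 1 (by simp)
  rw [huniq.eq_deriv _ hd2 hd1]
  have hF1 : F 1 = A z * ω z (z.2 - z₀.2) := by
    have h1 : F 1 = (X z * b z) one' :=
      IccExtend_of_mem (f := ⇑(X z * b z)) zero_le_one (x := 1) (by simp)
    rw [h1, ContinuousMap.mul_apply]
    congr 1
    change ω (fiberRay z₀.2 z 1) (z.2 - z₀.2) = _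
    rw [fiberRay_one]
  rw [hF1, neg_add_cancel]

/-- The parallel sections of a flat operator-valued form along the fibres `{q} × Y`: a radial
solution of the parallel transport equation solves it in all fibre directions. -/
theorem fderiv_add_mul_eq_zero_of_radial {ω : Q × Y → Y →L[ℝ] M}
    (hω : ContDiff ℝ (⊤ : ℕ∞) ω) {z₀ : Q × Y} {r : ℝ}
    (hflat : ∀ z ∈ Metric.ball z₀ r, ∀ u v : Y, fderiv ℝ ω z (0, u) v - fderiv ℝ ω z (0, v) u +
      (ω z v * ω z u - ω z u * ω z v) = 0)
    {A : Q × Y → M} (hA : ContDiffOn ℝ (⊤ : ℕ∞) A (Metric.ball z₀ r))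
    (hrad : ∀ z ∈ Metric.ball z₀ r,
      fderiv ℝ A z (0, z.2 - z₀.2) + A z * ω z (z.2 - z₀.2) = 0) :
    ∀ z ∈ Metric.ball z₀ r, ∀ u : Y, fderiv ℝ A z (0, u) + A z * ω z u = 0 := by
  have hA' : ∀ z ∈ Metric.ball z₀ r, ContDiffAt ℝ (⊤ : ℕ∞) A z := fun z hz =>
    hA.contDiffAt (Metric.isOpen_ball.mem_nhds hz)
  have hA1 : ∀ z ∈ Metric.ball z₀ r, HasFDerivAt A (fderiv ℝ A z) z := fun z hz =>
    ((hA' z hz).differentiableAt (by simp)).hasFDerivAt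
  have hA2 : ∀ z ∈ Metric.ball z₀ r,
      HasFDerivAt (fderiv ℝ A) (fderiv ℝ (fderiv ℝ A) z) z := fun z hz =>
    (((hA' z hz).fderiv_right (m := 1) (by norm_cast)).differentiableAt (by simp)).hasFDerivAt
  have hω1 : ∀ z, HasFDerivAt ω (fderiv ℝ ω z) z := fun z =>
    (hω.differentiable (by simp) z).hasFDerivAt
  -- the defect in direction `u`
  let w : Y → Q × Y → M := fun u z => fderiv ℝ A z (0, u) + A z * ω z u
  let w' : Y → Q × Y → Q × Y → M := fun u z h =>
    fderiv ℝ (fderiv ℝ A) z h (0, u) + (A z * fderiv ℝ ω z h u + fderiv ℝ A z h * ω z u)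
  have hw : ∀ u, ∀ z ∈ Metric.ball z₀ r, ∃ L : Q × Y →L[ℝ] M, HasFDerivAt (w u) L z ∧
      ∀ h, L h = w' u z h := by
    intro u z hz
    refine ⟨_, ((hA2 z hz).clm_apply (hasFDerivAt_const ((0, u) : Q × Y) z)).add
      ((hA1 z hz).mul' ((hω1 z).clm_apply (hasFDerivAt_const u z))), fun h => ?_⟩
    simp [w']
  have hdiff : ∀ u, ∀ z ∈ Metric.ball z₀ r, w' u z (0, z.2 - z₀.2)
      = - w u z - w u z * ω z (z.2 - z₀.2) := by
    intro u z hz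
    set v := z.2 - z₀.2 with hv
    -- differentiate the radial equation in direction `u`
    have h1 : w' v z (0, u) + w u z = 0 := by
      have hlin : HasFDerivAt (fun z : Q × Y => z.2 - z₀.2)
          (ContinuousLinearMap.snd ℝ Q Y) z := hasFDerivAt_snd.sub_const _
      have hlin' : HasFDerivAt (fun z : Q × Y => ((0, z.2 - z₀.2) : Q × Y))
          ((ContinuousLinearMap.inr ℝ Q Y).comp (ContinuousLinearMap.snd ℝ Q Y)) z :=
        (ContinuousLinearMap.inr ℝ Q Y).hasFDerivAt.comp z hlin
      have h2 := ((hA2 z hz).clm_apply hlin').add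
        ((hA1 z hz).mul' ((hω1 z).clm_apply hlin))
      have h3 : HasFDerivAt (fun _ : Q × Y => (0 : M)) (0 : Q × Y →L[ℝ] M) z :=
        hasFDerivAt_const _ _
      have h4 := h2.unique (h3.congr_of_eventuallyEq
        (by filter_upwards [Metric.isOpen_ball.mem_nhds hz] with y hy using hrad y hy))
      have h5 := congrArg (fun L : Q × Y →L[ℝ] M => L (0, u)) h4
      simp only [w', w]
      simp [← hv] at h5
      rw [← h5]
      abel
    have h2 := hflat z hz u v
    have h3 : fderiv ℝ (fderiv ℝ A) z (0, u) (0, v) = fderiv ℝ (fderiv ℝ A) z (0, v) (0, u) :=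
      (hA' z hz).isSymmSndFDerivAt
        (by rw [minSmoothness_of_isRCLikeNormedField]; exact WithTop.coe_le_coe.2 le_top) _ _
    have h4 : w v z = 0 := hrad z hz
    have h5 : w' u z (0, v) = w' v z (0, u) - w u z * ω z v + w v z * ω z u
        - A z * (fderiv ℝ ω z (0, u) v - fderiv ℝ ω z (0, v) u +
          (ω z v * ω z u - ω z u * ω z v)) := by
      simp only [w', w, h3]
      noncomm_ring
    rw [h5, h2, h4, eq_neg_of_add_eq_zero_left h1]
    noncomm_ring
  intro z hz u
  let γ : ℝ → Q × Y := fiberRay z₀.2 z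
  have hγ : Continuous γ := by unfold γ fiberRay; fun_prop
  have hωγ : Continuous fun t => ω (γ t) (z.2 - z₀.2) :=
    (hω.continuous.comp hγ).clm_apply continuous_const
  obtain ⟨C, hC⟩ := isCompact_Icc.exists_bound_of_continuousOn (s := Icc (0 : ℝ) 1)
    hωγ.continuousOn
  have hS : ∀ t ∈ Icc (0 : ℝ) 1, HasDerivAt (fun t => t • w u (γ t))
      (-(t • w u (γ t) * ω (γ t) (z.2 - z₀.2))) t := by
    intro t ht
    have hzt := fiberRay_mem_ball hz ht
    obtain ⟨L, hL, hLw⟩ := hw u (γ t) hzt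
    have h1 := (hasDerivAt_id t).smul (hL.comp_hasDerivAt t (hasDerivAt_fiberRay z₀.2 z t))
    refine h1.congr_deriv ?_
    have h2 := hdiff u (γ t) hzt
    rw [fiberRay_snd_sub, ← hLw] at h2
    have h3 : ((0, t • (z.2 - z₀.2)) : Q × Y) = t • (0, z.2 - z₀.2) := by simp
    rw [h3, map_smul] at h2
    simp only [id_eq, h2, map_smul, one_smul, Function.comp_apply, mul_smul_comm, smul_mul_assoc]
    abel
  have hzero := eq_zero_of_abs_deriv_le_mul_abs_self_of_eq_zero_right (K := C) (a := 0) (b := 1)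
    (f := fun t => t • w u (γ t))
    (fun t ht => (hS t ht).continuousAt.continuousWithinAt)
    (fun t ht => (hS t (Ico_subset_Icc_self ht)).hasDerivWithinAt) (zero_smul ℝ _)
    (fun t ht => by
      rw [norm_neg, mul_comm C]
      exact (norm_mul_le _ _).trans
        (mul_le_mul_of_nonneg_left (hC t (Ico_subset_Icc_self ht)) (norm_nonneg _)))
    1 (by simp)
  simpa [γ, fiberRay_one] using hzero

end radial

theorem ContDiffOn.contDiff_mul_of_tsupport_subset {E : Type*} [NormedAddCommGroup E]
    [NormedSpace ℝ E] {n : WithTop ℕ∞} {φ f : E → ℝ} {U : Set E} (hf : ContDiffOn ℝ n f U)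
    (hφ : ContDiff ℝ n φ) (hU : IsOpen U) (h : tsupport φ ⊆ U) :
    ContDiff ℝ n fun z => φ z * f z := by
  rw [contDiff_iff_contDiffAt]
  intro z
  by_cases hz : z ∈ tsupport φ
  · exact hφ.contDiffAt.mul (hf.contDiffAt (hU.mem_nhds (h hz)))
  · refine (contDiffAt_const (c := (0 : ℝ))).congr_of_eventuallyEq ?_
    filter_upwards [notMem_tsupport_iff_eventuallyEq.1 hz] with w hw
    simp [hw]

/-- A matrix entry of an endomorphism of `ℝⁿ`, as a continuous linear functional. -/
noncomputable def endEntry {n : ℕ} (m k : Fin n) : ((Fin n → ℝ) →L[ℝ] (Fin n → ℝ)) →L[ℝ] ℝ :=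
  (ContinuousLinearMap.proj m).comp (ContinuousLinearMap.apply ℝ (Fin n → ℝ) (Pi.single k 1))

theorem endEntry_apply {n : ℕ} (m k : Fin n) (T : (Fin n → ℝ) →L[ℝ] (Fin n → ℝ)) :
    endEntry m k T = T (Pi.single k 1) m := rfl

theorem endEntry_one {n : ℕ} (m k : Fin n) :
    endEntry m k 1 = if m = k then 1 else 0 := by
  simp [endEntry_apply, Pi.single_apply]

theorem endEntry_mul {n : ℕ} (m k : Fin n) (S T : (Fin n → ℝ) →L[ℝ] (Fin n → ℝ)) :
    endEntry m k (S * T) = ∑ j, endEntry m j S * endEntry j k T := by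
  have h := congrArg S (pi_eq_sum_univ' (T (Pi.single k 1)))
  simp only [endEntry_apply, mul_apply_eq_comp]
  rw [h, map_sum, Finset.sum_apply]
  refine Finset.sum_congr rfl fun j _ => ?_
  simp [mul_comm]

theorem ext_endEntry {n : ℕ} {S T : (Fin n → ℝ) →L[ℝ] (Fin n → ℝ)}
    (h : ∀ m k, endEntry m k S = endEntry m k T) : S = T := by
  refine ContinuousLinearMap.coe_injective (LinearMap.pi_ext' fun k => ?_)
  ext m
  exact h m k

/-- The endomorphism-valued form `u ↦ ∑ l, u l • β l` with coefficient functions `β`. -/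
noncomputable def endForm {E : Type*} {n : ℕ} (β : Fin n → Fin n → Fin n → E → ℝ) (z : E) :
    (Fin n → ℝ) →L[ℝ] (Fin n → ℝ) →L[ℝ] (Fin n → ℝ) :=
  ∑ l, ∑ m, ∑ k, β l m k z •
    (ContinuousLinearMap.proj (R := ℝ) (φ := fun _ : Fin n => ℝ) l).smulRight
      ((ContinuousLinearMap.proj (R := ℝ) (φ := fun _ : Fin n => ℝ) k).smulRight
        (Pi.single m 1 : Fin n → ℝ))

theorem endEntry_endForm {E : Type*} {n : ℕ} (β : Fin n → Fin n → Fin n → E → ℝ) (z : E)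
    (u : Fin n → ℝ) (m k : Fin n) : endEntry m k (endForm β z u) = ∑ l, u l * β l m k z := by
  simp [endForm, endEntry_apply, Pi.single_apply, mul_comm]

theorem contDiff_endForm {E : Type*} [NormedAddCommGroup E] [NormedSpace ℝ E] {n : ℕ}
    {N : WithTop ℕ∞} {β : Fin n → Fin n → Fin n → E → ℝ} (hβ : ∀ l m k, ContDiff ℝ N (β l m k)) :
    ContDiff ℝ N (endForm β) := by
  unfold endForm
  exact ContDiff.sum fun l _ => ContDiff.sum fun m _ => ContDiff.sum fun k _ =>
    (ContinuousLinearMap.toSpanSingleton ℝ _).contDiff.comp (hβ l m k)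

theorem endEntry_fderiv_endForm {E : Type*} [NormedAddCommGroup E] [NormedSpace ℝ E] {n : ℕ}
    {β : Fin n → Fin n → Fin n → E → ℝ} (hβ : ∀ l m k, ContDiff ℝ 1 (β l m k)) (z h : E)
    (u : Fin n → ℝ) (m k : Fin n) :
    endEntry m k (fderiv ℝ (endForm β) z h u) = ∑ l, u l * fderiv ℝ (β l m k) z h := by
  let L : ((Fin n → ℝ) →L[ℝ] (Fin n → ℝ) →L[ℝ] (Fin n → ℝ)) →L[ℝ] ℝ :=
    (endEntry m k).comp (ContinuousLinearMap.apply ℝ ((Fin n → ℝ) →L[ℝ] (Fin n → ℝ)) u)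
  have hL : HasFDerivAt L L (endForm β z) :=
    ContinuousLinearMap.hasFDerivAt (E := (Fin n → ℝ) →L[ℝ] (Fin n → ℝ) →L[ℝ] (Fin n → ℝ)) L
  have h1 := hL.comp z ((contDiff_endForm hβ).differentiable one_ne_zero z).hasFDerivAt
  have hLβ : L ∘ endForm β = fun w => ∑ l, u l * β l m k w :=
    funext fun w => endEntry_endForm β w u m k
  rw [hLβ] at h1
  have h2 : HasFDerivAt (fun w => ∑ l, u l * β l m k w) (∑ l, u l • fderiv ℝ (β l m k) z) z :=
    HasFDerivAt.fun_sum fun l _ =>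
      ((hβ l m k).differentiable one_ne_zero z).hasFDerivAt.const_mul (u l)
  simpa [L] using congrArg (fun T : E →L[ℝ] ℝ => T h) (h1.unique h2)

theorem map_eVec_eq_sum {p n : ℕ} {F : Type*} [AddCommGroup F] [Module ℝ F] [TopologicalSpace F]
    (L : (Fin p → ℝ) × (Fin n → ℝ) →L[ℝ] F) (u : Fin n → ℝ) :
    L (0, u) = ∑ i, u i • L (eVec p n i) := by
  have h : ((0, u) : (Fin p → ℝ) × (Fin n → ℝ)) = ∑ i, u i • eVec p n i := by
    ext j
    · simp [eVec, Prod.fst_sum]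
    · simp [eVec, Prod.snd_sum, Pi.single_apply]
  rw [h, map_sum]
  simp

theorem endForm_flat {p n : ℕ} {β : Fin n → Fin n → Fin n → (Fin p → ℝ) × (Fin n → ℝ) → ℝ}
    {z : (Fin p → ℝ) × (Fin n → ℝ)} (hβ : ∀ l m k, ContDiff ℝ 1 (β l m k))
    (hflat : ∀ i j k l,
      fderiv ℝ (β j k l) z (eVec p n i) - fderiv ℝ (β i k l) z (eVec p n j) +
        ∑ m', (β i m' l z * β j k m' z - β j m' l z * β i k m' z) = 0) (u v : Fin n → ℝ) :
    fderiv ℝ (endForm β) z (0, u) v - fderiv ℝ (endForm β) z (0, v) u +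
      (endForm β z v * endForm β z u - endForm β z u * endForm β z v) = 0 := by
  refine ext_endEntry fun k l => ?_
  have hprod : ∀ a b : Fin n → ℝ, endEntry k l (endForm β z a * endForm β z b)
      = ∑ i, ∑ j, b i * a j * ∑ m, β i m l z * β j k m z := by
    intro a b
    simp only [endEntry_mul, endEntry_endForm, Finset.sum_mul_sum]
    simp only [Finset.mul_sum]
    rw [Finset.sum_comm, Finset.sum_comm (f := fun i j => ∑ m, b i * a j * (_ * _))]
    refine Finset.sum_congr rfl fun j _ => ?_
    rw [Finset.sum_comm]
    exact Finset.sum_congr rfl fun i _ => Finset.sum_congr rfl fun m _ => by ring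
  have hder : ∀ a b : Fin n → ℝ, endEntry k l (fderiv ℝ (endForm β) z (0, a) b)
      = ∑ i, ∑ j, a i * b j * fderiv ℝ (β j k l) z (eVec p n i) := by
    intro a b
    rw [endEntry_fderiv_endForm hβ, Finset.sum_comm]
    refine Finset.sum_congr rfl fun j _ => ?_
    rw [map_eVec_eq_sum, Finset.mul_sum]
    exact Finset.sum_congr rfl fun i _ => by rw [smul_eq_mul]; ring
  have hswap : ∀ f : Fin n → Fin n → ℝ, ∑ i, ∑ j, f i j = ∑ i, ∑ j, f j i := fun f =>
    Finset.sum_comm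
  simp only [map_add, map_sub, map_zero, hprod, hder]
  rw [hswap fun i j => v i * u j * fderiv ℝ (β j k l) z (eVec p n i),
    hswap fun i j => v i * u j * ∑ m, β i m l z * β j k m z]
  simp only [← Finset.sum_sub_distrib, ← Finset.sum_add_distrib]
  refine Finset.sum_eq_zero fun i _ => Finset.sum_eq_zero fun j _ => ?_
  have := hflat i j k l
  rw [Finset.sum_sub_distrib] at this
  linear_combination u i * v j * this

theorem stmt5 (p n : ℕ)
    (U : Set ((Fin p → ℝ) × (Fin n → ℝ))) (hU : IsOpen U)
    -- `β l m' k` stands for `β^k_{l m'}`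
    (β : Fin n → Fin n → Fin n → ((Fin p → ℝ) × (Fin n → ℝ)) → ℝ)
    (hβ : ∀ l m' k, ContDiffOn ℝ (⊤ : ℕ∞) (β l m' k) U)
    (hflat : ∀ i j k l, ∀ z ∈ U,
      fderiv ℝ (β j k l) z (eVec p n i) - fderiv ℝ (β i k l) z (eVec p n j) +
        ∑ m', (β i m' l z * β j k m' z - β j m' l z * β i k m' z) = 0)
    (z₀ : (Fin p → ℝ) × (Fin n → ℝ)) (hz₀ : z₀ ∈ U) :
    ∃ U' : Set ((Fin p → ℝ) × (Fin n → ℝ)), U' ⊆ U ∧ IsOpen U' ∧ z₀ ∈ U' ∧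
      ∃ A : ((Fin p → ℝ) × (Fin n → ℝ)) → Fin n → Fin n → ℝ,
        ContDiffOn ℝ (⊤ : ℕ∞) A U' ∧
        (∀ j k, A z₀ j k = if j = k then 1 else 0) ∧
        (∀ z ∈ U', ∀ j k l,
          fderiv ℝ (fun w => A w j k) z (eVec p n l) +
            ∑ m', A z j m' * β l m' k z = 0) := by
  obtain ⟨ε, hε, hεU⟩ := Metric.isOpen_iff.1 hU z₀ hz₀
  let φ : ContDiffBump z₀ := ⟨ε / 4, ε / 2, by positivity, by linarith⟩
  have hφU : tsupport φ ⊆ U := by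
    rw [φ.tsupport_eq]
    exact (Metric.closedBall_subset_ball (half_lt_self hε)).trans hεU
  let β' : Fin n → Fin n → Fin n → ((Fin p → ℝ) × (Fin n → ℝ)) → ℝ :=
    fun l m k z => φ z * β l m k z
  have hβ' : ∀ l m k, ContDiff ℝ (⊤ : ℕ∞) (β' l m k) := fun l m k =>
    (hβ l m k).contDiff_mul_of_tsupport_subset φ.contDiff hU hφU
  have hsub : Metric.ball z₀ (ε / 4) ⊆ U :=
    (Metric.ball_subset_ball (by linarith)).trans hεU
  have heq : ∀ z ∈ Metric.ball z₀ (ε / 4), ∀ l m k, β' l m k z = β l m k z := fun z hz l m k => by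
    simp only [β', φ.one_of_mem_closedBall (Metric.ball_subset_closedBall hz), one_mul]
  have hflat' : ∀ z ∈ Metric.ball z₀ (ε / 4), ∀ i j k l,
      fderiv ℝ (β' j k l) z (eVec p n i) - fderiv ℝ (β' i k l) z (eVec p n j) +
        ∑ m', (β' i m' l z * β' j k m' z - β' j m' l z * β' i k m' z) = 0 := by
    intro z hz i j k l
    have hfd : ∀ l m k, fderiv ℝ (β' l m k) z = fderiv ℝ (β l m k) z := fun l m k =>
      Filter.EventuallyEq.fderiv_eq (by
        filter_upwards [Metric.isOpen_ball.mem_nhds hz] with w hw using heq w hw l m k)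
    simpa only [hfd, heq z hz] using hflat i j k l z (hsub hz)
  have hω := contDiff_endForm hβ'
  obtain ⟨r, hr, A, hA, hA₀, hrad⟩ := exists_radial_solution hω z₀
  have hr₁ : Metric.ball z₀ (min r (ε / 4)) ⊆ Metric.ball z₀ r :=
    Metric.ball_subset_ball (min_le_left _ _)
  have hr₂ : Metric.ball z₀ (min r (ε / 4)) ⊆ Metric.ball z₀ (ε / 4) :=
    Metric.ball_subset_ball (min_le_right _ _)
  have hsol := fderiv_add_mul_eq_zero_of_radial hω
    (fun z hz => endForm_flat (fun l m k => (hβ' l m k).of_le (by norm_cast))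
      (hflat' z (hr₂ hz))) (hA.mono hr₁) (fun z hz => hrad z (hr₁ hz))
  refine ⟨Metric.ball z₀ (min r (ε / 4)), hr₂.trans hsub, Metric.isOpen_ball,
    Metric.mem_ball_self (by positivity), fun z j k => endEntry j k (A z), ?_, ?_, ?_⟩
  · refine contDiffOn_pi.2 fun j => contDiffOn_pi.2 fun k => ?_
    exact (endEntry j k).contDiff.comp_contDiffOn (hA.mono hr₁)
  · intro j k
    simp only [hA₀, endEntry_one]
  · intro z hz j k l
    have hd : DifferentiableAt ℝ A z :=
      (hA.contDiffAt (Metric.isOpen_ball.mem_nhds (hr₁ hz))).differentiableAt (by simp)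
    have h1 : fderiv ℝ (fun w => endEntry j k (A w)) z = (endEntry j k).comp (fderiv ℝ A z) :=
      ((endEntry j k).hasFDerivAt.comp z hd.hasFDerivAt).fderiv
    have h2 := congrArg (endEntry j k) (hsol z hz (Pi.single l 1))
    rw [map_add, endEntry_mul, map_zero] at h2
    rw [h1, ← h2]
    congr 1
    refine Finset.sum_congr rfl fun m _ => ?_
    rw [endEntry_endForm]
    simp [Pi.single_apply, heq z (hr₂ hz)]
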